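/- arXiv:2410.10170 — 4 statements merged into one kernel-verified Lean document; each statement's English description precedes it below -/
import Mathlib

section
/- For any graph G with no isolated vertices, the total domination number satisfies γ_t(G) ≤ i_0(G) + 1, where i_0(G) is the isolate number of G. -/
/-!
A maximal isolate set `S` dominates `G`: if `y ∉ S` had no neighbor in `S`, then `insert y S` would
be an isolate set, with `y` isolated. Likewise, once any `x ∉ S` is added, no vertex of `insert x S`
is isolated in it, so `insert x S` is a total dominating set. Without isolated vertices in `G`, such
an `x` exists: any neighbor of the vertex isolated in `S`.
-/

variable {V : Type*} [Fintype V] [DecidableEq V]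

/-- `S` is a total dominating set of `G`: every vertex of `G` has a neighbor in `S`. -/
def IsTotalDomSet (G : SimpleGraph V) (S : Finset V) : Prop :=
  ∀ v : V, ∃ u ∈ S, G.Adj u v

/-- The total domination number: minimum cardinality of a total dominating set. -/
noncomputable def totalDomNum (G : SimpleGraph V) : ℕ :=
  sInf {n | ∃ S : Finset V, IsTotalDomSet G S ∧ S.card = n}

/-- `S` is an isolate set of `G`: some vertex of `S` has no neighbor in `S`. -/
def IsIsolateSet (G : SimpleGraph V) (S : Finset V) : Prop :=
  ∃ v ∈ S, ∀ u ∈ S, ¬ G.Adj v u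

/-- `S` is a maximal isolate set of `G`. -/
def IsMaximalIsolateSet (G : SimpleGraph V) (S : Finset V) : Prop :=
  IsIsolateSet G S ∧ ∀ T : Finset V, S ⊂ T → ¬ IsIsolateSet G T

/-- The isolate number: minimum cardinality of a maximal isolate set. -/
noncomputable def isolateNum (G : SimpleGraph V) : ℕ :=
  sInf {n | ∃ S : Finset V, IsMaximalIsolateSet G S ∧ S.card = n}

section

variable {α : Type*} {G : SimpleGraph α} {S : Finset α} {x y : α}

/-- `S` is a dominating set of `G`: every vertex outside `S` has a neighbor in `S`. This is the
intermediate property through which a maximal isolate set extends to a total dominating set. -/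
def IsDomSet (G : SimpleGraph α) (S : Finset α) : Prop :=
  ∀ v ∉ S, ∃ u ∈ S, G.Adj u v

theorem IsTotalDomSet.totalDomNum_le_card (hS : IsTotalDomSet G S) : totalDomNum G ≤ S.card :=
  Nat.sInf_le ⟨S, hS, rfl⟩

theorem totalDomNum_eq_zero_of_isEmpty [IsEmpty α] (G : SimpleGraph α) : totalDomNum G = 0 :=
  have h : IsTotalDomSet G ∅ := isEmptyElim
  Nat.le_zero.mp h.totalDomNum_le_card

theorem isIsolateSet_singleton (G : SimpleGraph α) (x : α) : IsIsolateSet G {x} :=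
  ⟨x, by simp⟩

theorem not_isIsolateSet_iff : ¬ IsIsolateSet G S ↔ ∀ v ∈ S, ∃ u ∈ S, G.Adj v u := by
  simp only [IsIsolateSet, not_exists, not_and, not_forall, not_not, exists_prop]

theorem isMaximalIsolateSet_iff_maximal : IsMaximalIsolateSet G S ↔ Maximal (IsIsolateSet G) S := by
  rw [maximal_iff_forall_gt]
  rfl

theorem IsIsolateSet.exists_notMem (hS : IsIsolateSet G S) (h : ∀ v, ∃ u, G.Adj v u) :
    ∃ x, x ∉ S := by
  obtain ⟨v, -, hv⟩ := hS
  obtain ⟨x, hvx⟩ := h v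
  exact ⟨x, fun hx => hv x hx hvx⟩

theorem IsIsolateSet.exists_superset_isMaximalIsolateSet [Finite α] (hS : IsIsolateSet G S) :
    ∃ T, S ⊆ T ∧ IsMaximalIsolateSet G T := by
  simpa only [isMaximalIsolateSet_iff_maximal, Set.mem_ofPred_eq] using
    (Set.toFinite {T | IsIsolateSet G T}).exists_le_maximal hS

theorem exists_isMaximalIsolateSet [Finite α] [Nonempty α] (G : SimpleGraph α) :
    ∃ S, IsMaximalIsolateSet G S := by
  obtain ⟨x⟩ := ‹Nonempty α›
  obtain ⟨S, -, hS⟩ := (isIsolateSet_singleton G x).exists_superset_isMaximalIsolateSet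
  exact ⟨S, hS⟩

theorem exists_isMaximalIsolateSet_card_eq_isolateNum (h : ∃ S, IsMaximalIsolateSet G S) :
    ∃ S, IsMaximalIsolateSet G S ∧ S.card = isolateNum G := by
  obtain ⟨S, hS⟩ := h
  exact Nat.sInf_mem (s := {n | ∃ S, IsMaximalIsolateSet G S ∧ S.card = n}) ⟨S.card, S, hS, rfl⟩

namespace IsMaximalIsolateSet

theorem exists_adj_of_mem_insert [DecidableEq α] (hS : IsMaximalIsolateSet G S) (hx : x ∉ S)
    (hy : y ∈ insert x S) : ∃ u ∈ insert x S, G.Adj y u :=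
  not_isIsolateSet_iff.mp (hS.2 _ (Finset.ssubset_insert hx)) y hy

theorem isDomSet (hS : IsMaximalIsolateSet G S) : IsDomSet G S := by
  classical
  intro y hy
  obtain ⟨u, hu, hyu⟩ := hS.exists_adj_of_mem_insert hy (Finset.mem_insert_self y S)
  exact ⟨u, Finset.mem_of_mem_insert_of_ne hu hyu.ne', hyu.symm⟩

theorem isTotalDomSet_insert [DecidableEq α] (hS : IsMaximalIsolateSet G S) (hx : x ∉ S) :
    IsTotalDomSet G (insert x S) := by
  intro y
  by_cases hy : y ∈ S
  · obtain ⟨u, hu, hyu⟩ := hS.exists_adj_of_mem_insert hx (Finset.mem_insert_of_mem hy)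
    exact ⟨u, hu, hyu.symm⟩
  · obtain ⟨u, hu, huy⟩ := hS.isDomSet y hy
    exact ⟨u, Finset.mem_insert_of_mem hu, huy⟩

theorem totalDomNum_le_card_add_one (hS : IsMaximalIsolateSet G S) (h : ∀ v, ∃ u, G.Adj v u) :
    totalDomNum G ≤ S.card + 1 := by
  classical
  obtain ⟨x, hx⟩ := hS.1.exists_notMem h
  calc
    totalDomNum G ≤ (insert x S).card := (hS.isTotalDomSet_insert hx).totalDomNum_le_card
    _ = S.card + 1 := Finset.card_insert_of_notMem hx

end IsMaximalIsolateSet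

theorem totalDomNum_le_isolateNum_add_one_general (h : ∀ v, ∃ u, G.Adj v u)
    (hG : ∃ S, IsMaximalIsolateSet G S) : totalDomNum G ≤ isolateNum G + 1 := by
  obtain ⟨S, hS, hcard⟩ := exists_isMaximalIsolateSet_card_eq_isolateNum hG
  exact hcard ▸ hS.totalDomNum_le_card_add_one h

end

/-- For any graph `G` with no isolated vertices, `γ_t(G) ≤ i_0(G) + 1`. -/
theorem totalDomNum_le_isolateNum_add_one (G : SimpleGraph V)
    (h : ∀ v : V, ∃ u : V, G.Adj v u) :
    totalDomNum G ≤ isolateNum G + 1 := by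
  cases isEmpty_or_nonempty V
  · exact (totalDomNum_eq_zero_of_isEmpty G).trans_le (Nat.zero_le _)
  · exact totalDomNum_le_isolateNum_add_one_general h (exists_isMaximalIsolateSet G)
end

section
/- Let S be an isolate set of a graph G. Then S is a maximal isolate set of G if and only if every vertex in V∖S is adjacent to all the isolates of S (i.e., to every vertex of S that is isolated in the induced subgraph G[S]). -/
variable {V : Type*} [Fintype V] [DecidableEq V]

section

omit [Fintype V] [DecidableEq V]

variable {G : SimpleGraph V} {S T : Finset V} {t u v : V}

/-- `u` is an isolate of `S`: a vertex of `S` that is isolated in the subgraph of `G`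
induced by `S`. -/
def IsIsolate (G : SimpleGraph V) (S : Finset V) (u : V) : Prop :=
  u ∈ S ∧ ∀ w ∈ S, ¬ G.Adj u w

lemma IsIsolate.anti (ht : IsIsolate G T t) (hST : S ⊆ T) (htS : t ∈ S) : IsIsolate G S t :=
  ⟨htS, fun w hw => ht.2 w (hST hw)⟩

lemma isIsolate_insert_iff_of_mem [DecidableEq V] (hu : u ∈ S) :
    IsIsolate G (insert v S) u ↔ IsIsolate G S u ∧ ¬ G.Adj v u := by
  simp only [IsIsolate, Finset.forall_mem_insert, Finset.mem_insert_of_mem hu, hu, true_and,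
    G.adj_comm u v, and_comm]

lemma IsIsolate.mem_of_forall_adj (ht : IsIsolate G T t) (hu : u ∈ T)
    (hadj : ∀ v ∉ S, G.Adj v u) : t ∈ S :=
  by_contra fun htS => ht.2 u hu (hadj t htS)

lemma IsMaximalIsolateSet.adj_of_notMem (hS : IsMaximalIsolateSet G S) (hv : v ∉ S)
    (hu : IsIsolate G S u) : G.Adj v u := by
  classical
  by_contra hvu
  have hu' : IsIsolate G (insert v S) u := (isIsolate_insert_iff_of_mem hu.1).2 ⟨hu, hvu⟩
  exact hS.2 (insert v S) (Finset.ssubset_insert hv) ⟨u, hu'⟩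

lemma IsIsolateSet.isMaximalIsolateSet_of_forall_adj (hS : IsIsolateSet G S)
    (hadj : ∀ v ∉ S, ∀ u, IsIsolate G S u → G.Adj v u) : IsMaximalIsolateSet G S := by
  refine ⟨hS, ?_⟩
  rintro T hST ⟨t, ht : IsIsolate G T t⟩
  obtain ⟨u, hu : IsIsolate G S u⟩ := hS
  obtain ⟨v, hvT, hvS⟩ := Finset.exists_of_ssubset hST
  have htS : t ∈ S := ht.mem_of_forall_adj (hST.subset hu.1) fun w hw => hadj w hw u hu
  have hvt : G.Adj v t := hadj v hvS t (ht.anti hST.subset htS)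
  exact ht.2 v hvT hvt.symm

theorem isMaximalIsolateSet_iff_general (G : SimpleGraph V) (S : Finset V)
    (hS : IsIsolateSet G S) :
    IsMaximalIsolateSet G S ↔
      ∀ v : V, v ∉ S → ∀ u ∈ S, (∀ w ∈ S, ¬ G.Adj u w) → G.Adj v u where
  mp hmax _ hv _ huS hu := hmax.adj_of_notMem hv ⟨huS, hu⟩
  mpr hadj := hS.isMaximalIsolateSet_of_forall_adj fun v hv u hu => hadj v hv u hu.1 hu.2

end

/-- An isolate set `S` is maximal if and only if every vertex outside `S` is adjacent
to every isolate of `S` (every vertex of `S` having no neighbor in `S`). -/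
theorem isMaximalIsolateSet_iff (G : SimpleGraph V) (S : Finset V)
    (hS : IsIsolateSet G S) :
    IsMaximalIsolateSet G S ↔
      ∀ v : V, v ∉ S → ∀ u ∈ S, (∀ w ∈ S, ¬ G.Adj u w) → G.Adj v u :=
  isMaximalIsolateSet_iff_general G S hS
end

section
/- If a nontrivial connected graph G satisfies γ_t(G) = (diam(G) + 1)/2 (equivalently 2·γ_t(G) = diam(G) + 1), then G has a spanning tree T which is a caterpillar and satisfies diam(T) = diam(G). -/
variable {V : Type*} [Fintype V] [DecidableEq V]

/-- `H` is a path graph: it has a (possibly trivial) path passing through all its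
vertices and using all its edges. -/
def IsPathGraph {W : Type*} (H : SimpleGraph W) : Prop :=
  ∃ (u v : W) (p : H.Walk u v), p.IsPath ∧ (∀ w : W, w ∈ p.support) ∧
    ∀ e ∈ H.edgeSet, e ∈ p.edges

/-- `T` is a caterpillar: a tree in which removing all leaves (vertices of degree one)
leaves a path. -/
def IsCaterpillar (T : SimpleGraph V) : Prop :=
  T.IsTree ∧ IsPathGraph (T.induce {v : V | (T.neighborSet v).ncard ≠ 1})

/-!
Let `w` be a geodesic from `a` to `b` whose length `d` is the diameter, let `S` be a total
dominating set with `2 |S| = d + 1`, and call the distance from `a` the level of a vertex. If `x`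
and `y` lie on levels `m` and `m + 1`, then `S` has two vertices on the levels `m - 1, …, m + 2`:
some `s ∈ S` dominating `x`, and either a dominator of `s` or, if that one is on level `m - 2`, so
that `s` is on level `m - 1`, a dominator of `y`. Disjoint windows of four levels thus give `d ≡ 3
(mod 4)`, and they exhaust `S`. Placing them in different ways shows that `S` has exactly one
vertex on each level `≡ 1, 2 (mod 4)` below `d` and no others, whence it lies on a geodesic of
length `d`. Joining every vertex outside the interior of that geodesic to its dominator yields a
spanning caterpillar of diameter at most `d`.
-/

open SimpleGraph

section Walks

variable {α : Type*} {G : SimpleGraph α} {x y : α}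

theorem isAcyclic_of_unique_adj_rank_le {β : Type*} [LinearOrder β] (r : α → β)
    (h : ∀ ⦃u v w⦄, G.Adj u v → G.Adj u w → r v ≤ r u → r w ≤ r u → v = w) : G.IsAcyclic := by
  classical
  intro v c hc
  obtain ⟨u, hu, hmax⟩ := Set.exists_max_image {z | z ∈ c.support} r (List.finite_toSet _)
    ⟨v, c.start_mem_support⟩
  have hc' : (c.rotate u hu).IsCycle := hc.rotate hu
  have hle : ∀ z ∈ (c.rotate u hu).support, r z ≤ r u := fun z hz =>
    hmax z ((c.mem_support_rotate_iff _ hu).1 hz)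
  exact hc'.snd_ne_penultimate <| h ((c.rotate u hu).adj_snd hc'.not_nil)
    ((c.rotate u hu).adj_penultimate hc'.not_nil).symm
    (hle _ (Walk.getVert_mem_support _ _)) (hle _ (Walk.getVert_mem_support _ _))

theorem exists_walk_support_eq_map (p : ℕ → α) (n : ℕ) (hp : ∀ i < n, G.Adj (p i) (p (i + 1))) :
    ∃ q : G.Walk (p 0) (p n), q.support = (List.range (n + 1)).map p := by
  induction n with
  | zero => exact ⟨.nil, rfl⟩
  | succ n ih =>
    obtain ⟨q, hq⟩ := ih fun i hi => hp i (by omega)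
    exact ⟨q.concat (hp n n.lt_succ_self), by
      rw [Walk.support_concat, hq, List.range_succ (n := n + 1), List.map_append]; rfl⟩

theorem exists_isPath_of_injOn {p : ℕ → α} {n : ℕ} (hp : ∀ i < n, G.Adj (p i) (p (i + 1)))
    (hinj : Set.InjOn p (Set.Iic n)) :
    ∃ q : G.Walk (p 0) (p n), q.IsPath ∧ q.length = n ∧
      ∀ v, v ∈ q.support ↔ ∃ i ≤ n, p i = v := by
  obtain ⟨q, hq⟩ := exists_walk_support_eq_map p n hp
  have hle : ∀ {i}, i ∈ List.range (n + 1) ↔ i ≤ n := by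
    simp only [List.mem_range, Nat.lt_succ_iff, implies_true]
  refine ⟨q, ?_, ?_, fun v => ?_⟩
  · rw [Walk.isPath_def, hq]
    exact List.nodup_range.map_on fun i hi j hj => hinj (hle.1 hi) (hle.1 hj)
  · have := q.length_support
    rw [hq, List.length_map, List.length_range] at this
    omega
  · simp only [hq, List.mem_map, hle]

theorem edist_le_length_of_mem_support (q : G.Walk x y) {u v : α} (hu : u ∈ q.support)
    (hv : v ∈ q.support) : G.edist u v ≤ q.length := by
  classical
  rw [← q.take_spec hu, Walk.mem_support_append_iff] at hv
  rcases hv with hv | hv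
  · calc G.edist u v = G.edist v u := edist_comm
      _ ≤ ((q.takeUntil u hu).dropUntil v hv).length := edist_le _
      _ ≤ q.length := by
        exact_mod_cast (Walk.length_dropUntil_le_length _ _).trans (q.length_takeUntil_le_length hu)
  · calc G.edist u v ≤ ((q.dropUntil u hu).takeUntil v hv).length := edist_le _
      _ ≤ q.length := by
        exact_mod_cast (Walk.length_takeUntil_le_length _ _).trans (q.length_dropUntil_le_length hu)

theorem ediam_le_length_add_two (q : G.Walk x y)
    (hq : ∀ u, ∃ v ∈ q.support, G.edist u v ≤ 1) : G.ediam ≤ q.length + 2 := by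
  refine ediam_le_of_edist_le fun u v => ?_
  obtain ⟨u', hu', huu'⟩ := hq u
  obtain ⟨v', hv', hvv'⟩ := hq v
  rw [SimpleGraph.edist_comm] at hvv'
  calc G.edist u v ≤ G.edist u u' + (G.edist u' v' + G.edist v' v) :=
        SimpleGraph.edist_triangle.trans (add_le_add_right SimpleGraph.edist_triangle _)
    _ ≤ 1 + (q.length + 1) := by
        gcongr
        exact edist_le_length_of_mem_support q hu' hv'
    _ = q.length + 2 := by ring

theorem idxOf_support_getVert [DecidableEq α] {q : G.Walk x y} (hq : q.IsPath)
    {i : ℕ} (hi : i ≤ q.length) : q.support.idxOf (q.getVert i) = i := by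
  have hi' : i < q.support.length := by rw [q.length_support]; omega
  rw [q.getVert_eq_support_getElem hi]
  exact hq.support_nodup.idxOf_getElem i hi'

theorem idxOf_support_eq_add_one_or_of_mem_edges [DecidableEq α] {q : G.Walk x y}
    (hq : q.IsPath) {u v : α} (h : s(u, v) ∈ q.edges) :
    q.support.idxOf v = q.support.idxOf u + 1 ∨ q.support.idxOf u = q.support.idxOf v + 1 := by
  obtain ⟨i, hi, h⟩ := q.mk_mem_edges_iff_exists.1 h
  have h₀ := idxOf_support_getVert hq hi.le
  have h₁ := idxOf_support_getVert hq (i := i + 1) hi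
  rcases Sym2.eq_iff.1 h with ⟨rfl, rfl⟩ | ⟨rfl, rfl⟩ <;> omega

theorem ncard_neighborSet_ne_one_of_isPath {q : G.Walk x y} (hq : q.IsPath) {z : α}
    (hz : z ∈ q.support) (hzx : z ≠ x) (hzy : z ≠ y) : (G.neighborSet z).ncard ≠ 1 := by
  obtain ⟨i, rfl, hi⟩ := Walk.mem_support_iff_exists_getVert.1 hz
  have hi₀ : i ≠ 0 := fun h => hzx (by rw [h, q.getVert_zero])
  have hin : i ≠ q.length := fun h => hzy (by rw [h, q.getVert_length])
  have htwo := hq.ncard_neighborSet_toSubgraph_internal_eq_two hi₀ (by omega)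
  intro hone
  have hfin : (G.neighborSet (q.getVert i)).Finite := Set.finite_of_ncard_ne_zero (by omega)
  have := Set.ncard_le_ncard (q.toSubgraph.neighborSet_subset (q.getVert i)) hfin
  omega

theorem isPathGraph_induce_support {q : G.Walk x y} (hq : q.IsPath)
    (hchord : q.IsChordless) : IsPathGraph (G.induce {v | v ∈ q.support}) := by
  have hmap : (q.induce {v | v ∈ q.support} fun _ => id).map (Embedding.induce _).toHom = q :=
    q.map_induce _
  have hedges := (congrArg Walk.edges hmap).symm.trans (Walk.edges_map _ _)
  refine ⟨_, _, q.induce {v | v ∈ q.support} fun _ => id, .of_map (by rwa [hmap]),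
    fun v => ?_, Sym2.ind fun u v huv => ?_⟩
  · rw [Walk.support_induce]
    exact (List.mem_attachWith _ v).2 v.2
  · have hmem : s(u.1, v.1) ∈ q.edges := hchord.mem_edges u.2 v.2 huv
    exact (List.mem_map_of_injective (Sym2.map.injective Subtype.val_injective)).1
      ((congrArg (s(u.1, v.1) ∈ ·) hedges).mp hmem)

end Walks

section CaterpillarAlong

variable {α : Type*} {G : SimpleGraph α} {x y : α} {q : G.Walk x y} {f : α → α}

/-- The graph whose edges are those of the walk `q`, together with an edge from each vertex `u`
outside `q` to `f u`. It is a caterpillar with spine `q` when `q` is a path and `f` sends the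
vertices outside `q` into `q`, hitting both endpoints. -/
def caterpillarAlong (q : G.Walk x y) (f : α → α) : SimpleGraph α :=
  q.toSubgraph.spanningCoe ⊔ fromRel fun u v => u ∉ q.support ∧ v = f u

theorem caterpillarAlong_adj (hf : ∀ u ∉ q.support, f u ∈ q.support) {u v : α} :
    (caterpillarAlong q f).Adj u v ↔
      s(u, v) ∈ q.edges ∨ (u ∉ q.support ∧ v = f u) ∨ (v ∉ q.support ∧ u = f v) := by
  simp only [caterpillarAlong, sup_adj, Subgraph.spanningCoe_adj,
    Walk.adj_toSubgraph_iff_mem_edges, fromRel_adj]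
  refine or_congr_right (and_iff_right_of_imp ?_)
  rintro (⟨hu, rfl⟩ | ⟨hv, rfl⟩) h
  exacts [hu (h ▸ hf u hu), hv (h ▸ hf v hv)]

theorem caterpillarAlong_le (hf : ∀ u ∉ q.support, G.Adj u (f u)) : caterpillarAlong q f ≤ G := by
  refine sup_le q.toSubgraph.spanningCoe_le fun u v huv => ?_
  rcases ((fromRel_adj _ _ _).1 huv).2 with ⟨hu, rfl⟩ | ⟨hv, rfl⟩
  exacts [hf u hu, (hf v hv).symm]

theorem caterpillarAlong.mem_edgeSet_of_mem_edges {e : Sym2 α} (he : e ∈ q.edges) :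
    e ∈ (caterpillarAlong q f).edgeSet :=
  edgeSet_mono le_sup_left (by rwa [Subgraph.edgeSet_spanningCoe, Walk.mem_edges_toSubgraph])

/-- The spine `q`, viewed as a walk in `caterpillarAlong q f`. -/
def caterpillarAlong.spine (q : G.Walk x y) (f : α → α) : (caterpillarAlong q f).Walk x y :=
  q.transfer _ fun _ => mem_edgeSet_of_mem_edges

theorem caterpillarAlong.support_spine : (spine q f).support = q.support :=
  q.support_transfer _

theorem caterpillarAlong.isPath_spine (hq : q.IsPath) : (spine q f).IsPath :=
  hq.transfer _

theorem caterpillarAlong.isChordless_spine (hf : ∀ u ∉ q.support, f u ∈ q.support) :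
    (spine q f).IsChordless := by
  refine Walk.isChordless_iff_forall_mem_edges.2 fun u v hu hv huv => ?_
  rw [support_spine] at hu hv
  rw [spine, Walk.edges_transfer]
  simpa only [hu, hv, not_true_eq_false, false_and, or_false] using
    (caterpillarAlong_adj hf).1 huv

theorem caterpillarAlong.neighborSet_of_notMem (hf : ∀ u ∉ q.support, f u ∈ q.support) {u : α}
    (hu : u ∉ q.support) : (caterpillarAlong q f).neighborSet u = {f u} := by
  ext v
  rw [mem_neighborSet, caterpillarAlong_adj hf, Set.mem_singleton_iff]
  constructor
  · rintro (h | ⟨-, h⟩ | ⟨hv, rfl⟩)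
    exacts [absurd (q.fst_mem_support_of_mem_edges h) hu, h, absurd (hf v hv) hu]
  · exact fun h => .inr (.inl ⟨hu, h⟩)

theorem caterpillarAlong.isAcyclic (hq : q.IsPath) (hf : ∀ u ∉ q.support, f u ∈ q.support) :
    (caterpillarAlong q f).IsAcyclic := by
  classical
  refine isAcyclic_of_unique_adj_rank_le q.support.idxOf fun u v w huv huw hv hw => ?_
  by_cases hu : u ∈ q.support
  · have edge : ∀ z, (caterpillarAlong q f).Adj u z → q.support.idxOf z ≤ q.support.idxOf u →
        z ∈ q.support ∧ q.support.idxOf u = q.support.idxOf z + 1 := fun z huz hz => by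
      have hz' : z ∈ q.support :=
        List.idxOf_lt_length_iff.1 (hz.trans_lt (List.idxOf_lt_length_iff.2 hu))
      have hmem : s(u, z) ∈ q.edges := by
        simpa only [hu, hz', not_true_eq_false, false_and, or_false] using
          (caterpillarAlong_adj hf).1 huz
      have := idxOf_support_eq_add_one_or_of_mem_edges hq hmem
      exact ⟨hz', by omega⟩
    exact (List.idxOf_inj (edge v huv hv).1).1 (by
      have := edge v huv hv
      have := edge w huw hw
      omega)
  · rw [← mem_neighborSet, neighborSet_of_notMem hf hu] at huv huw
    exact huv.trans huw.symm

theorem caterpillarAlong.ediam_le (hf : ∀ u ∉ q.support, f u ∈ q.support) :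
    (caterpillarAlong q f).ediam ≤ q.length + 2 := by
  rw [← q.length_transfer fun _ => mem_edgeSet_of_mem_edges]
  refine ediam_le_length_add_two (spine q f) fun u => ?_
  rw [support_spine]
  by_cases hu : u ∈ q.support
  · exact ⟨u, hu, by rw [edist_self]; exact zero_le_one⟩
  · exact ⟨f u, hf u hu,
      (edist_eq_one_iff_adj.2 ((caterpillarAlong_adj hf).2 (.inr (.inl ⟨hu, rfl⟩)))).le⟩

theorem caterpillarAlong.isTree (hq : q.IsPath) (hf : ∀ u ∉ q.support, f u ∈ q.support) :
    (caterpillarAlong q f).IsTree := by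
  have : Nonempty α := ⟨x⟩
  have htop : (q.length + 2 : ℕ∞) < ⊤ := ENat.natCast_lt_top (q.length + 2)
  exact ⟨connected_of_ediam_ne_top ((caterpillarAlong.ediam_le hf).trans_lt htop).ne,
    isAcyclic hq hf⟩

theorem caterpillarAlong.ncard_neighborSet_ne_one_of_mem (hq : q.IsPath)
    (hf : ∀ u ∉ q.support, f u ∈ q.support) {a b : α} (hab : a ≠ b)
    (ha : a ∉ q.support) (hax : f a = x) (hb : b ∉ q.support) (hby : f b = y)
    {u : α} (hu : u ∈ q.support) :
    ((caterpillarAlong q f).neighborSet u).ncard ≠ 1 := by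
  have hadj_a : (caterpillarAlong q f).Adj a x :=
    (caterpillarAlong_adj hf).2 (.inr (.inl ⟨ha, hax.symm⟩))
  have hadj_b : (caterpillarAlong q f).Adj y b :=
    (caterpillarAlong_adj hf).2 (.inr (.inr ⟨hb, hby.symm⟩))
  have hpath : (((spine q f).concat hadj_b).cons hadj_a).IsPath := by
    refine ((isPath_spine hq).concat (by rwa [support_spine]) hadj_b).cons ?_
    rw [Walk.support_concat, support_spine]
    simp [ha, hab]
  refine ncard_neighborSet_ne_one_of_isPath hpath ?_ (fun h => ha (h ▸ hu)) (fun h => hb (h ▸ hu))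
  rw [Walk.support_cons, Walk.support_concat, support_spine]
  simp [hu]

theorem caterpillarAlong.isCaterpillar (hq : q.IsPath)
    (hf : ∀ u ∉ q.support, f u ∈ q.support) {a b : α} (hab : a ≠ b)
    (ha : a ∉ q.support) (hax : f a = x) (hb : b ∉ q.support) (hby : f b = y) :
    IsCaterpillar (caterpillarAlong q f) := by
  have hsupp : {v | ((caterpillarAlong q f).neighborSet v).ncard ≠ 1} =
      {v | v ∈ (spine q f).support} := by
    ext v
    rw [Set.mem_ofPred_eq, Set.mem_ofPred_eq, support_spine]
    refine ⟨fun hv => by_contra fun hvq => hv ?_,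
      ncard_neighborSet_ne_one_of_mem hq hf hab ha hax hb hby⟩
    rw [neighborSet_of_notMem hf hvq, Set.ncard_singleton]
  refine ⟨isTree hq hf, ?_⟩
  rw [hsupp]
  exact isPathGraph_induce_support (isPath_spine hq) (isChordless_spine hf)

theorem exists_spanning_caterpillar_of_dominating_path
    (hq : q.IsPath) (hlen : q.length + 2 = G.diam)
    (hdom : ∀ u ∉ q.support, f u ∈ q.support ∧ G.Adj u (f u)) {a b : α} (hab : a ≠ b)
    (ha : a ∉ q.support) (hax : f a = x) (hb : b ∉ q.support) (hby : f b = y) :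
    ∃ T ≤ G, T.IsTree ∧ IsCaterpillar T ∧ T.diam = G.diam := by
  have hle : caterpillarAlong q f ≤ G := caterpillarAlong_le fun u hu => (hdom u hu).2
  have hf : ∀ u ∉ q.support, f u ∈ q.support := fun u hu => (hdom u hu).1
  have hediam : (caterpillarAlong q f).ediam ≤ (G.diam : ℕ∞) := by
    rw [← hlen]; exact caterpillarAlong.ediam_le hf
  exact ⟨caterpillarAlong q f, hle, caterpillarAlong.isTree hq hf,
    caterpillarAlong.isCaterpillar hq hf hab ha hax hb hby,
    (ENat.toNat_le_of_le_natCast hediam).antisymm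
      (diam_anti_of_ediam_ne_top hle (hediam.trans_lt (ENat.natCast_lt_top _)).ne)⟩

end CaterpillarAlong

section TightTotalDomination

variable {α : Type*} {G : SimpleGraph α} {S : Finset α} {a b : α}

theorem dist_le_dist_add_one_of_adj {u v : α} (h : G.Adj u v) :
    G.dist a u ≤ G.dist a v + 1 := by
  have := h.diff_dist_adj (u := a)
  omega

theorem dist_getVert_of_length_eq_dist {w : G.Walk a b} (hw : w.length = G.dist a b) {i : ℕ}
    (hi : i ≤ w.length) : G.dist a (w.getVert i) = i := by
  rw [← length_eq_dist_of_subwalk hw (w.isSubwalk_take i), w.take_length, min_eq_left hi]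

/-- The vertices of `S` on the four consecutive distance levels `m - 1, …, m + 2` from `a`: the
levels that can be occupied by the dominators of two vertices on levels `m` and `m + 1`. The lower
bound is written so as to avoid truncated subtraction. -/
noncomputable def levelWindow (G : SimpleGraph α) (a : α) (S : Finset α) (m : ℕ) : Finset α :=
  {s ∈ S | m ≤ G.dist a s + 1 ∧ G.dist a s ≤ m + 2}

theorem mem_levelWindow {m : ℕ} {s : α} :
    s ∈ levelWindow G a S m ↔ s ∈ S ∧ m ≤ G.dist a s + 1 ∧ G.dist a s ≤ m + 2 :=
  Finset.mem_filter

theorem IsTotalDomSet.exists_adj_dist (hS : IsTotalDomSet G S) (a v : α) :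
    ∃ s ∈ S, G.Adj s v ∧ G.dist a s ≤ G.dist a v + 1 ∧ G.dist a v ≤ G.dist a s + 1 := by
  obtain ⟨s, hs, hsv⟩ := hS v
  exact ⟨s, hs, hsv, dist_le_dist_add_one_of_adj hsv, dist_le_dist_add_one_of_adj hsv.symm⟩

theorem two_le_card_levelWindow (hS : IsTotalDomSet G S) {x y : α} {m : ℕ}
    (hx : G.dist a x = m) (hy : G.dist a y = m + 1) : 2 ≤ (levelWindow G a S m).card := by
  obtain ⟨s, hs, -, hsx₁, hsx₂⟩ := hS.exists_adj_dist a x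
  obtain ⟨t, ht, hts, hts₁, hts₂⟩ := hS.exists_adj_dist a s
  obtain ⟨r, hr, -, hry₁, hry₂⟩ := hS.exists_adj_dist a y
  have hs_mem : s ∈ levelWindow G a S m := mem_levelWindow.2 ⟨hs, by omega, by omega⟩
  refine Finset.one_lt_card.2 ⟨s, hs_mem, ?_⟩
  -- If `t` misses the window, then `s` lies on level `m - 1`, too low to dominate `y`.
  by_cases htm : m ≤ G.dist a t + 1
  · exact ⟨t, mem_levelWindow.2 ⟨ht, htm, by omega⟩, hts.ne'⟩
  · refine ⟨r, mem_levelWindow.2 ⟨hr, by omega, by omega⟩, fun hsr => ?_⟩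
    subst hsr
    omega

theorem two_mul_le_card_biUnion_levelWindow [DecidableEq α] (hS : IsTotalDomSet G S)
    {w : G.Walk a b} (hw : w.length = G.dist a b) {m : ℕ → ℕ} {n : ℕ}
    (hm : ∀ i j, i < j → m i + 4 ≤ m j) (hmw : ∀ i < n, m i < w.length) :
    2 * n ≤ ((Finset.range n).biUnion fun i => levelWindow G a S (m i)).card := by
  have hdisj : ∀ i j, i ≠ j →
      Disjoint (levelWindow G a S (m i)) (levelWindow G a S (m j)) := fun i j hij =>
    Finset.disjoint_left.2 fun s hi hj => by
      have := (mem_levelWindow.1 hi).2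
      have := (mem_levelWindow.1 hj).2
      rcases hij.lt_or_gt with h | h <;> have := hm _ _ h <;> omega
  have htwo : ∀ i ∈ Finset.range n, 2 ≤ (levelWindow G a S (m i)).card := fun i hi =>
    have hi := hmw i (Finset.mem_range.1 hi)
    two_le_card_levelWindow hS (dist_getVert_of_length_eq_dist hw hi.le)
      (dist_getVert_of_length_eq_dist hw hi)
  calc 2 * n = ∑ _i ∈ Finset.range n, 2 := by
        rw [Finset.sum_const, Finset.card_range, smul_eq_mul, mul_comm]
    _ ≤ ∑ i ∈ Finset.range n, (levelWindow G a S (m i)).card := Finset.sum_le_sum htwo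
    _ = _ := (Finset.card_biUnion fun i _ j _ => hdisj i j).symm

theorem two_mul_le_card_of_add_four_le (hS : IsTotalDomSet G S) {w : G.Walk a b}
    (hw : w.length = G.dist a b) {m : ℕ → ℕ} {n : ℕ} (hm : ∀ i j, i < j → m i + 4 ≤ m j)
    (hmw : ∀ i < n, m i < w.length) : 2 * n ≤ S.card := by
  classical
  exact (two_mul_le_card_biUnion_levelWindow hS hw hm hmw).trans <|
    Finset.card_le_card <| Finset.biUnion_subset.2 fun _ _ => Finset.filter_subset _ _

theorem exists_mem_levelWindow_of_card_le (hS : IsTotalDomSet G S) {w : G.Walk a b}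
    (hw : w.length = G.dist a b) {m : ℕ → ℕ} {n : ℕ} (hm : ∀ i j, i < j → m i + 4 ≤ m j)
    (hmw : ∀ i < n, m i < w.length) (hcard : S.card ≤ 2 * n) {s : α} (hs : s ∈ S) :
    ∃ i < n, s ∈ levelWindow G a S (m i) := by
  classical
  have hsub : (Finset.range n).biUnion (fun i => levelWindow G a S (m i)) ⊆ S :=
    Finset.biUnion_subset.2 fun _ _ => Finset.filter_subset _ _
  rw [← Finset.eq_of_subset_of_card_le hsub
    (hcard.trans (two_mul_le_card_biUnion_levelWindow hS hw hm hmw))] at hs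
  simpa only [Finset.mem_biUnion, Finset.mem_range] using hs

theorem length_mod_four_of_tight (hS : IsTotalDomSet G S) {w : G.Walk a b}
    (hw : w.length = G.dist a b) (hcard : 2 * S.card = w.length + 1) : w.length % 4 = 3 := by
  have := two_mul_le_card_of_add_four_le hS hw (m := fun i => 4 * i) (n := (w.length + 3) / 4)
    (by omega) (by omega)
  omega

theorem dist_lt_length_of_tight (hS : IsTotalDomSet G S) {w : G.Walk a b}
    (hw : w.length = G.dist a b) (hcard : 2 * S.card = w.length + 1) {s : α} (hs : s ∈ S) :
    G.dist a s < w.length := by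
  have := length_mod_four_of_tight hS hw hcard
  obtain ⟨i, hi, hsi⟩ := exists_mem_levelWindow_of_card_le hS hw (m := fun i => 4 * i)
    (n := (w.length + 1) / 4) (by omega) (by omega) (by omega) hs
  have := (mem_levelWindow.1 hsi).2
  omega

theorem dist_mod_four_of_tight (hS : IsTotalDomSet G S) {w : G.Walk a b}
    (hw : w.length = G.dist a b) (hcard : 2 * S.card = w.length + 1) {s : α} (hs : s ∈ S) :
    G.dist a s % 4 = 1 ∨ G.dist a s % 4 = 2 := by
  have := length_mod_four_of_tight hS hw hcard
  by_contra hmod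
  -- These windows still exhaust `S`, but they skip levels `4k - 1` and `4k`, where `s` would lie.
  obtain ⟨k, hk⟩ : ∃ k, G.dist a s + 1 = 4 * k ∨ G.dist a s = 4 * k :=
    ⟨(G.dist a s + 1) / 4, by omega⟩
  obtain ⟨i, -, hsi⟩ := exists_mem_levelWindow_of_card_le hS hw
    (m := fun i => if i < k then 4 * i else 4 * i + 2) (n := (w.length + 1) / 4)
    (fun i j hij => by split_ifs <;> omega) (fun i hi => by split_ifs <;> omega) (by omega) hs
  have := (mem_levelWindow.1 hsi).2
  split_ifs at this <;> omega

theorem exists_mem_dist_eq_of_tight (hS : IsTotalDomSet G S) {w : G.Walk a b}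
    (hw : w.length = G.dist a b) (hcard : 2 * S.card = w.length + 1) {i : ℕ}
    (hi : i ≤ w.length) (hmod : i % 4 = 1 ∨ i % 4 = 2) : ∃ s ∈ S, G.dist a s = i := by
  have := length_mod_four_of_tight hS hw hcard
  obtain ⟨j, hj, hij⟩ : ∃ j ≤ w.length, i % 4 = 1 ∧ j + 1 = i ∨ i % 4 = 2 ∧ j = i + 1 := by
    rcases hmod with h | h
    exacts [⟨i - 1, by omega, by omega⟩, ⟨i + 1, by omega, by omega⟩]
  obtain ⟨s, hs, -, h₁, h₂⟩ := hS.exists_adj_dist a (w.getVert j)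
  rw [dist_getVert_of_length_eq_dist hw hj] at h₁ h₂
  have := dist_mod_four_of_tight hS hw hcard hs
  exact ⟨s, hs, by omega⟩

theorem injOn_dist_of_tight (hS : IsTotalDomSet G S) {w : G.Walk a b}
    (hw : w.length = G.dist a b) (hcard : 2 * S.card = w.length + 1) :
    Set.InjOn (G.dist a) S := by
  have hlen := length_mod_four_of_tight hS hw hcard
  -- Halving numbers the admissible levels `1, 2, 5, 6, …` consecutively.
  have hmaps : Set.MapsTo (fun s => G.dist a s / 2) S (Finset.range S.card) := fun s hs => by
    have := dist_lt_length_of_tight hS hw hcard hs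
    exact Finset.mem_coe.2 (Finset.mem_range.2 (show G.dist a s / 2 < S.card by omega))
  have hsurj : Set.SurjOn (fun s => G.dist a s / 2) S (Finset.range S.card) := fun j hj => by
    have hj := Finset.mem_range.1 (Finset.mem_coe.1 hj)
    obtain ⟨s, hs, hsj⟩ := exists_mem_dist_eq_of_tight hS hw hcard (i := 2 * j + 1 - j % 2)
      (by omega) (by omega)
    exact ⟨s, hs, by simp only [hsj]; omega⟩
  have hinj := Finset.injOn_of_surjOn_of_card_le _ hmaps hsurj (Finset.card_range _).ge
  exact fun s hs t ht hst => hinj hs ht (congrArg (· / 2) hst)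

theorem exists_geodesic_of_tight (hS : IsTotalDomSet G S) {w : G.Walk a b}
    (hw : w.length = G.dist a b) (hcard : 2 * S.card = w.length + 1) :
    ∃ p : ℕ → α, (∀ i ≤ w.length, G.dist a (p i) = i) ∧
      (∀ i < w.length, G.Adj (p i) (p (i + 1))) ∧ ∀ s ∈ S, p (G.dist a s) = s := by
  have hmod := fun s => dist_mod_four_of_tight hS hw hcard (s := s)
  have hinj := injOn_dist_of_tight hS hw hcard
  have hlevel : ∀ i, ∃ x, (i ≤ w.length → G.dist a x = i) ∧
      (i ≤ w.length → i % 4 = 1 ∨ i % 4 = 2 → x ∈ S) ∧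
      (i % 4 = 0 ∨ i % 4 = 3 → x = w.getVert i) := fun i => by
    by_cases hi : i ≤ w.length ∧ (i % 4 = 1 ∨ i % 4 = 2)
    · obtain ⟨s, hs, hsi⟩ := exists_mem_dist_eq_of_tight hS hw hcard hi.1 hi.2
      exact ⟨s, fun _ => hsi, fun _ _ => hs, by omega⟩
    · exact ⟨w.getVert i, dist_getVert_of_length_eq_dist hw, by tauto, fun _ => rfl⟩
  choose p hdist hmem hgeo using hlevel
  have hfix : ∀ s ∈ S, p (G.dist a s) = s := fun s hs => by
    have hlt := dist_lt_length_of_tight hS hw hcard hs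
    exact hinj (hmem _ hlt.le (hmod s hs)) hs (hdist _ hlt.le)
  refine ⟨p, hdist, fun i hi => ?_, hfix⟩
  have h₀ := hdist i hi.le
  have h₁ := hdist (i + 1) hi
  obtain h | h | h : i % 4 = 3 ∨ i % 4 = 2 ∨ i % 4 = 0 ∨ i % 4 = 1 := by omega
  · rw [hgeo i (.inr h), hgeo (i + 1) (by omega)]
    exact w.adj_getVert_succ hi
  · obtain ⟨s, hs, hadj, hs₁, hs₂⟩ := hS.exists_adj_dist a (p (i + 1))
    have := hmod s hs
    rw [← hfix s hs, show G.dist a s = i by omega] at hadj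
    exact hadj
  · obtain ⟨s, hs, hadj, hs₁, hs₂⟩ := hS.exists_adj_dist a (p i)
    have := hmod s hs
    have hne : G.dist a s ≠ i := fun hsi => hadj.ne (by rw [← hfix s hs, hsi])
    rw [← hfix s hs, show G.dist a s = i + 1 by omega] at hadj
    exact hadj.symm

theorem exists_core_of_tight (hS : IsTotalDomSet G S) {w : G.Walk a b}
    (hw : w.length = G.dist a b) (hcard : 2 * S.card = w.length + 1) :
    ∃ (x y : α) (q : G.Walk x y), q.IsPath ∧ q.length + 2 = w.length ∧
      (∀ v ∈ q.support, 1 ≤ G.dist a v ∧ G.dist a v < w.length) ∧ (∀ s ∈ S, s ∈ q.support) ∧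
      (∀ s ∈ S, G.Adj s a → s = x) ∧ ∀ s ∈ S, G.Adj s b → s = y := by
  obtain ⟨p, hdist, hadj, hfix⟩ := exists_geodesic_of_tight hS hw hcard
  have hmod := length_mod_four_of_tight hS hw hcard
  have hlt := fun s => dist_lt_length_of_tight hS hw hcard (s := s)
  have hpos : ∀ s ∈ S, 1 ≤ G.dist a s := fun s hs => by
    have := dist_mod_four_of_tight hS hw hcard hs
    omega
  have hdist' : ∀ i ≤ w.length - 2, G.dist a (p (i + 1)) = i + 1 :=
    fun i hi => hdist (i + 1) (by omega)
  obtain ⟨q, hq, hlen, hmem⟩ := exists_isPath_of_injOn (p := fun i => p (i + 1))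
    (n := w.length - 2) (fun i hi => hadj (i + 1) (by omega)) fun i hi j hj hij => by
      simpa only [hdist' i hi, hdist' j hj, Nat.add_right_cancel_iff] using congrArg (G.dist a) hij
  refine ⟨_, _, q, hq, by omega, fun v hv => ?_, fun s hs => ?_, fun s hs hsa => ?_,
    fun s hs hsb => ?_⟩
  · obtain ⟨i, hi, rfl⟩ := (hmem v).1 hv
    rw [hdist' i hi]
    omega
  · refine (hmem s).2 ⟨G.dist a s - 1, by have := hlt s hs; omega, ?_⟩
    rw [Nat.sub_add_cancel (hpos s hs), hfix s hs]
  · rw [← hfix s hs, SimpleGraph.dist_comm, dist_eq_one_iff_adj.2 hsa]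
  · have hle : G.dist a b ≤ G.dist a s + 1 := dist_le_dist_add_one_of_adj hsb.symm
    rw [← hfix s hs, show G.dist a s = w.length - 2 + 1 by have := hlt s hs; omega]

theorem exists_spanning_caterpillar_of_tight (hS : IsTotalDomSet G S)
    {w : G.Walk a b} (hw : w.length = G.dist a b) (hdiam : w.length = G.diam)
    (hcard : 2 * S.card = w.length + 1) :
    ∃ T ≤ G, T.IsTree ∧ IsCaterpillar T ∧ T.diam = G.diam := by
  obtain ⟨x, y, q, hq, hlen, hlevel, hSq, hx, hy⟩ := exists_core_of_tight hS hw hcard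
  choose f hfS hf using hS
  have ha : a ∉ q.support := fun h => by
    have := (hlevel a h).1
    rw [dist_self] at this
    omega
  have hb : b ∉ q.support := fun h => ((hlevel b h).2.trans_eq hw).false
  have hab : a ≠ b := by
    rintro rfl
    rw [dist_self] at hw
    omega
  exact exists_spanning_caterpillar_of_dominating_path hq (hlen.trans hdiam)
    (fun u _ => ⟨hSq _ (hfS u), (hf u).symm⟩) hab ha (hx _ (hfS a) (hf a)) hb (hy _ (hfS b) (hf b))

end TightTotalDomination

theorem exists_spanning_caterpillar_general {α : Type*} (G : SimpleGraph α)
    (h : 2 * totalDomNum G = G.diam + 1) :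
    ∃ T : SimpleGraph α, T ≤ G ∧ T.IsTree ∧ IsCaterpillar T ∧ T.diam = G.diam := by
  have hdiam : G.diam ≠ 0 := by omega
  have : Nonempty α := (nontrivial_of_diam_ne_zero hdiam).to_nonempty
  have hconn : G.Connected := connected_of_ediam_ne_top (ediam_ne_top_of_diam_ne_zero hdiam)
  obtain ⟨S, hS, hcard⟩ : totalDomNum G ∈ {n | ∃ S : Finset α, IsTotalDomSet G S ∧ S.card = n} :=
    Nat.sInf_mem (Nat.nonempty_of_pos_sInf (show 0 < totalDomNum G by omega))
  obtain ⟨a, b, hab⟩ := G.exists_dist_eq_diam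
  obtain ⟨w, hw⟩ := hconn.exists_walk_length_eq_dist a b
  exact exists_spanning_caterpillar_of_tight hS hw (hw.trans hab) (by omega)

/-- If a nontrivial connected graph `G` satisfies `2 * γ_t(G) = diam(G) + 1`, then `G`
has a spanning tree which is a caterpillar of the same diameter as `G`. -/
theorem exists_spanning_caterpillar (G : SimpleGraph V)
    (hc : G.Connected) (hn : 1 < Fintype.card V)
    (h : 2 * totalDomNum G = G.diam + 1) :
    ∃ T : SimpleGraph V, T ≤ G ∧ T.IsTree ∧ IsCaterpillar T ∧ T.diam = G.diam :=
  exists_spanning_caterpillar_general G h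
end

section
/- Let G be a connected graph with diam(G) ≥ 3 and let S be a maximal isolate set of G. Then every diametral path of G (a shortest path between two vertices at distance diam(G)) contains at least one vertex of S. -/
/-!
Adding a vertex `w ∉ S` to a maximal isolate set `S` must destroy the isolation of any isolated
vertex `x` of `S`, so `x` is adjacent to `w`. Hence `S` is the complement of the neighborhood of
`x`, and any two vertices outside `S` have the common neighbor `x`. The endpoints of a diametral
path are more than two steps apart, so at least one of them lies in `S`.
-/

variable {V : Type*} [Fintype V] [DecidableEq V]

namespace IsMaximalIsolateSet

variable {α : Type*} {G : SimpleGraph α} {S : Finset α}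

theorem exists_eq_compl_neighborSet (hS : IsMaximalIsolateSet G S) :
    ∃ x, (S : Set α) = (G.neighborSet x)ᶜ := by
  classical
  obtain ⟨⟨x, hxS, hx_isolated⟩, hS_max⟩ := hS
  refine ⟨x, Set.Subset.antisymm hx_isolated fun w hxw ↦ ?_⟩
  by_contra hwS
  refine hS_max (insert w S) (Finset.ssubset_insert hwS) ⟨x, Finset.mem_insert_of_mem hxS, ?_⟩
  exact (Finset.forall_mem_insert _ _ _).2 ⟨hxw, hx_isolated⟩

theorem commonNeighbors_nonempty_of_notMem (hS : IsMaximalIsolateSet G S) {u v : α}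
    (hu : u ∉ S) (hv : v ∉ S) : (G.commonNeighbors u v).Nonempty := by
  obtain ⟨x, hSx⟩ := hS.exists_eq_compl_neighborSet
  have adj_of_notMem {w : α} (hw : w ∉ S) : G.Adj x w := by
    rwa [← Finset.mem_coe, hSx, Set.notMem_compl_iff, SimpleGraph.mem_neighborSet] at hw
  exact ⟨x, (adj_of_notMem hu).symm, (adj_of_notMem hv).symm⟩

end IsMaximalIsolateSet

theorem diametral_path_meets_maximal_isolate_set_general {α : Type*} {G : SimpleGraph α}
    {S : Finset α} (hS : IsMaximalIsolateSet G S) {u v : α} (huv : 2 < G.edist u v) :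
    u ∈ S ∨ v ∈ S := by
  by_contra! ⟨hu, hv⟩
  have no_common_neighbor := (SimpleGraph.two_lt_edist_iff.1 huv).2.2
  exact (hS.commonNeighbors_nonempty_of_notMem hu hv).ne_empty no_common_neighbor

/-- If `G` is a connected graph with `diam(G) ≥ 3` and `S` is a maximal isolate set
of `G`, then every diametral path of `G` contains a vertex of `S`. -/
theorem diametral_path_meets_maximal_isolate_set (G : SimpleGraph V)
    (hc : G.Connected) (hdiam : 3 ≤ G.diam)
    (S : Finset V) (hS : IsMaximalIsolateSet G S)
    (u v : V) (p : G.Walk u v) (hp : p.IsPath)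
    (hshortest : p.length = G.dist u v) (hdiametral : G.dist u v = G.diam) :
    ∃ w ∈ p.support, w ∈ S := by
  have huv : 2 < G.edist u v := by
    rw [← (hc u v).coe_dist_eq_edist, hdiametral]
    exact_mod_cast hdiam
  obtain hu | hv := diametral_path_meets_maximal_isolate_set_general hS huv
  exacts [⟨u, p.start_mem_support, hu⟩, ⟨v, p.end_mem_support, hv⟩]
end
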